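/- arXiv:1804.02548 — 2 statements merged into one kernel-verified Lean document; each statement's English description precedes it below -/
import Mathlib

section
/- Let d ∈ 𝔉 be any bounded function. Then the class ℬ_d equals the class of automatic groups: every group in ℬ_d is automatic. In particular, if for some f ∈ 𝔉 the class ℬ_f contains a non-automatic group, then f is unbounded. -/
namespace CAG

/-- The convolution `w₁ ⊗ w₂` of two words, over the padded alphabet
`(Σ ∪ {⋄})²`, modelled as `Option α × Option α` where `none` is the padding symbol `⋄`. -/
def conv {α : Type*} : List α → List α → List (Option α × Option α)
  | [], [] => []
  | a :: as, [] => (some a, none) :: conv as []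
  | [], b :: bs => (none, some b) :: conv [] bs
  | a :: as, b :: bs => (some a, some b) :: conv as bs

/-- A binary relation on words is regular if the language of convolutions of its pairs
is a regular language. -/
def IsRegularRel {α : Type*} (R : Set (List α × List α)) : Prop :=
  Language.IsRegular {w | ∃ p ∈ R, w = conv p.1 p.2}

variable {G : Type*} [Group G]

/-- The alphabet `S = A ∪ A⁻¹` associated to a generating set `A ⊆ G`. -/
def Alph (A : Set G) : Type _ := {x : G // x ∈ A ∪ A⁻¹}

/-- The canonical evaluation map `π : S* → G`. -/
def eval (A : Set G) (w : List (Alph A)) : G := (w.map Subtype.val).prod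

/-- The word length `d_A(g)` of `g` with respect to the generating set `A`. -/
noncomputable def wordLength (A : Set G) (g : G) : ℕ :=
  sInf {n | ∃ w : List (Alph A), eval A w = g ∧ w.length = n}

/-- The distance `d_A(g₁, g₂)` in the Cayley graph of `G` with respect to `A`. -/
noncomputable def cayleyDist (A : Set G) (g₁ g₂ : G) : ℕ := wordLength A (g₁⁻¹ * g₂)

/-- `ψ : L → G` is a Cayley automatic representation of `G` (w.r.t. the
generating set `A`): `L ⊆ S*` is regular, `ψ` is a bijection from `L` onto `G`, and for every
`a ∈ A` the relation `R_a = {(ψ⁻¹(g), ψ⁻¹(g·a)) : g ∈ G}` is regular. -/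
def IsCayleyAutomaticRep (A : Set G) (L : Language (Alph A)) (ψ : List (Alph A) → G) : Prop :=
  Language.IsRegular L ∧ Set.BijOn ψ L Set.univ ∧
    ∀ a ∈ A, IsRegularRel {p : List (Alph A) × List (Alph A) |
      p.1 ∈ L ∧ p.2 ∈ L ∧ ψ p.2 = ψ p.1 * a}

/-- `G` is Cayley automatic with respect to the generating set `A`. -/
def IsCayleyAutomatic (A : Set G) : Prop :=
  ∃ (L : Language (Alph A)) (ψ : List (Alph A) → G), IsCayleyAutomaticRep A L ψ

/-- `G` is automatic (in the sense of Thurston) with respect to the generating set `A`: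
there is a regular language `L ⊆ S*` on which the canonical evaluation map `π` is a bijection
onto `G` and all the relations `R_a`, `a ∈ A`, are regular. -/
def IsAutomatic (A : Set G) : Prop :=
  ∃ L : Language (Alph A), IsCayleyAutomaticRep A L (eval A)

/-- The family `𝔉` of non-decreasing, non-negative real valued functions defined on a
final segment `[Q, ∞)` of `ℕ` (values below `Q` are irrelevant junk values). -/
structure FFun where
  Q : ℕ
  toFun : ℕ → ℝ
  nonneg : ∀ n, Q ≤ n → 0 ≤ toFun n
  mono : ∀ m n, Q ≤ m → m ≤ n → toFun m ≤ toFun n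

/-- `h ⪯ f` : there are positive integers `K, M, N`, with `[N,∞)` contained in the domains of
`h` and `f`, such that `h(n) ≤ K·f(M·n)` for all `n ≥ N`. -/
def FFun.Preceq (h f : FFun) : Prop :=
  ∃ K M N : ℕ, 0 < K ∧ 0 < M ∧ 0 < N ∧ h.Q ≤ N ∧ f.Q ≤ N ∧
    ∀ n, N ≤ n → h.toFun n ≤ K * f.toFun (M * n)

/-- `h ≍ f` iff `h ⪯ f` and `f ⪯ h`. -/
def FFun.Equiv (h f : FFun) : Prop := h.Preceq f ∧ f.Preceq h

/-- `h ≺ f` iff `h ⪯ f` and not `h ≍ f`. -/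
def FFun.Prec (h f : FFun) : Prop := h.Preceq f ∧ ¬ h.Equiv f

/-- `G ∈ ℬ_f` with respect to the generating set `A`: there is a Cayley automatic
representation `ψ : L → G` such that the function
`h(n) = max{d_A(π(w), ψ(w)) : w ∈ L, |w| ≤ n}` satisfies `h ⪯ f`
(stated equivalently: for some positive `K, M, N` with `N ≥ Q_f`, every `w ∈ L` with `|w| ≤ n`
and `n ≥ N` satisfies `d_A(π(w), ψ(w)) ≤ K·f(M·n)`). -/
def InB (A : Set G) (f : FFun) : Prop :=
  ∃ (L : Language (Alph A)) (ψ : List (Alph A) → G),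
    IsCayleyAutomaticRep A L ψ ∧
    ∃ K M N : ℕ, 0 < K ∧ 0 < M ∧ 0 < N ∧ f.Q ≤ N ∧
      ∀ n, N ≤ n → ∀ w ∈ L, w.length ≤ n →
        (cayleyDist A (eval A w) (ψ w) : ℝ) ≤ K * f.toFun (M * n)

/-- The identity function `𝔦(n) = n` as an element of `𝔉`. -/
def identF : FFun where
  Q := 1
  toFun n := n
  nonneg n _ := by positivity
  mono m n _ h := by simpa using (Nat.cast_le (α := ℝ)).mpr h

/-- The exponential function `𝔢(n) = exp n` as an element of `𝔉`. -/
noncomputable def expF : FFun where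
  Q := 1
  toFun n := Real.exp n
  nonneg n _ := (Real.exp_pos n).le
  mono m n _ h := Real.exp_le_exp.mpr (by exact_mod_cast h)

end CAG

namespace CAG

/-- Myhill-Nerode in the form used below: a finite-range invariant compatible with appending a
letter and recognising membership gives regularity. -/
lemma isRegular_of_invariant {β X : Type*} (K : Language β) (F : List β → X)
    (hfin : (Set.range F).Finite)
    (hstep : ∀ u v a, F u = F v → F (u ++ [a]) = F (v ++ [a]))
    (hacc : ∀ u v, F u = F v → u ∈ K → v ∈ K) : K.IsRegular := by
  have hext : ∀ s u v, F u = F v → F (u ++ s) = F (v ++ s) := by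
    intro s
    induction s with
    | nil => intro u v h; simpa using h
    | cons a s ih =>
      intro u v h
      have := ih _ _ (hstep u v a h)
      simpa using this
  apply Language.IsRegular.of_finite_range_leftQuotient
  have hf : Function.FactorsThrough K.leftQuotient F := by
    intro u v h
    ext s
    rw [Language.mem_leftQuotient, Language.mem_leftQuotient]
    exact ⟨hacc _ _ (hext s u v h), hacc _ _ (hext s v u h.symm)⟩
  have : Set.range K.leftQuotient ⊆ (Function.extend F K.leftQuotient (fun _ => K)) '' Set.range F := by
    rintro _ ⟨u, rfl⟩
    exact ⟨F u, ⟨u, rfl⟩, hf.extend_apply _ u⟩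
  exact (hfin.image _).subset this

lemma isRegular_congr {β : Type*} {K K' : Language β} (hK : K.IsRegular)
    (h : ∀ v, v ∈ K' ↔ v ∈ K) : K'.IsRegular := by
  have : K' = K := by ext v; exact h v
  rwa [this]

lemma isRegular_append_letter {β : Type*} {K : Language β} (hK : K.IsRegular) (c : β) :
    Language.IsRegular ({v | ∃ w ∈ K, v = w ++ [c]} : Language β) := by
  obtain ⟨σ, _, D, hD⟩ := hK
  have hmem : ∀ u, u ∈ K ↔ D.eval u ∈ D.accept := by intro u; rw [← hD]; rfl
  refine isRegular_of_invariant (X := σ × Prop) _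
    (fun v => (D.eval v, ∃ w ∈ K, v = w ++ [c])) (Set.toFinite _) ?_ ?_
  · intro u v a h
    simp only [Prod.mk.injEq] at h ⊢
    refine ⟨by simp [h.1], ?_⟩
    have key : ∀ u : List β, (∃ w ∈ K, u ++ [a] = w ++ [c]) ↔ (D.eval u ∈ D.accept ∧ a = c) := by
      intro u
      constructor
      · rintro ⟨w, hw, h⟩
        have := List.append_inj' h rfl
        obtain ⟨rfl, h2⟩ := this
        exact ⟨(hmem _).1 hw, by simpa using h2⟩
      · rintro ⟨hu, rfl⟩
        exact ⟨u, (hmem _).2 hu, rfl⟩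
    rw [eq_iff_iff, key, key, h.1]
  · intro u v h hu
    simp only [Prod.mk.injEq] at h
    exact h.2.mp hu

lemma isRegular_append_word {β : Type*} {K : Language β} (hK : K.IsRegular) (c : List β) :
    Language.IsRegular ({v | ∃ w ∈ K, v = w ++ c} : Language β) := by
  induction c generalizing K with
  | nil =>
    refine isRegular_congr hK fun v => ?_
    change (∃ w ∈ K, v = w ++ []) ↔ v ∈ K
    simp
  | cons a c ih =>
    refine isRegular_congr (ih (isRegular_append_letter hK a)) fun v => ?_
    change (∃ w ∈ K, v = w ++ a :: c) ↔
      ∃ w' ∈ ({v | ∃ w ∈ K, v = w ++ [a]} : Language β), v = w' ++ c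
    constructor
    · rintro ⟨w, hw, rfl⟩
      exact ⟨w ++ [a], ⟨w, hw, rfl⟩, by simp⟩
    · rintro ⟨_, ⟨w, hw, rfl⟩, rfl⟩
      exact ⟨w, hw, by simp⟩

lemma isRegular_biUnion {β ι : Type*} {s : Set ι} (hs : s.Finite) (K : ι → Language β)
    (hK : ∀ i, (K i).IsRegular) :
    Language.IsRegular ({v | ∃ i ∈ s, v ∈ K i} : Language β) := by
  induction s, hs using Set.Finite.induction_on with
  | empty =>
    refine isRegular_of_invariant (X := Unit) _ (fun _ => ()) (Set.toFinite _) ?_ ?_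
    · intros; rfl
    · rintro u v - ⟨i, hi, -⟩
      exact hi.elim
  | @insert i s _ _ ih =>
    refine isRegular_congr ((hK i).add ih) fun v => ?_
    change (∃ j ∈ insert i s, v ∈ K j) ↔ (v ∈ K i ∨ ∃ j ∈ s, v ∈ K j)
    simp

/-- The doubling of a letter. -/
def dbl {α : Type*} (a : α) : Option α × Option α := (some a, some a)

lemma isRegular_map_dbl {α : Type*} {K : Language α} (hK : K.IsRegular) :
    Language.IsRegular ({v | ∃ w ∈ K, v = w.map dbl} : Language (Option α × Option α)) := by
  obtain ⟨σ, _, D, hD⟩ := hK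
  have hmem : ∀ u, u ∈ K ↔ D.eval u ∈ D.accept := by intro u; rw [← hD]; rfl
  have hfm : ∀ w : List α, (w.map dbl).filterMap Prod.fst = w := by
    intro w
    induction w with
    | nil => rfl
    | cons a w ih => simp [dbl, ih]
  refine isRegular_of_invariant (X := σ × Prop) _
    (fun v => (D.eval (v.filterMap Prod.fst), ∃ w : List α, v = w.map dbl)) (Set.toFinite _) ?_ ?_
  · intro u v a h
    simp only [Prod.mk.injEq] at h ⊢
    constructor
    · simp only [DFA.eval, List.filterMap_append, DFA.evalFrom_of_append] at h ⊢
      rw [h.1]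
    · have key : ∀ u : List (Option α × Option α), (∃ w : List α, u ++ [a] = w.map dbl) ↔
          ((∃ w : List α, u = w.map dbl) ∧ ∃ b, a = dbl b) := by
        intro u
        constructor
        · rintro ⟨w, hw⟩
          obtain ⟨w1, w2, rfl, h1, h2⟩ := List.append_eq_map_iff.1 hw
          refine ⟨⟨w1, h1.symm⟩, ?_⟩
          obtain ⟨b, l, -, hb, -⟩ := List.map_eq_cons_iff.1 h2
          exact ⟨b, hb.symm⟩
        · rintro ⟨⟨w, rfl⟩, b, rfl⟩
          exact ⟨w ++ [b], by simp⟩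
      rw [eq_iff_iff, key, key, h.2]
  · rintro u v h ⟨w, hw, rfl⟩
    simp only [Prod.mk.injEq] at h
    obtain ⟨w', rfl⟩ := h.2.mp ⟨w, rfl⟩
    refine ⟨w', ?_, rfl⟩
    rw [hmem] at hw ⊢
    have := h.1
    rw [hfm, hfm] at this
    rwa [← this]

/-! ### Convolutions -/

lemma conv_fst {α : Type*} (x y : List α) : (conv x y).filterMap Prod.fst = x := by
  induction x, y using conv.induct with
  | case1 => simp [conv]
  | case2 a as ih => rw [conv, List.filterMap_cons, ih]
  | case3 b bs ih => rw [conv, List.filterMap_cons, ih]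
  | case4 a as b bs ih => rw [conv, List.filterMap_cons, ih]

lemma conv_snd {α : Type*} (x y : List α) : (conv x y).filterMap Prod.snd = y := by
  induction x, y using conv.induct with
  | case1 => simp [conv]
  | case2 a as ih => rw [conv, List.filterMap_cons, ih]
  | case3 b bs ih => rw [conv, List.filterMap_cons, ih]
  | case4 a as b bs ih => rw [conv, List.filterMap_cons, ih]

lemma conv_inj {α : Type*} {x y x' y' : List α} (h : conv x y = conv x' y') :
    x = x' ∧ y = y' := by
  constructor
  · rw [← conv_fst x y, h, conv_fst]
  · rw [← conv_snd x y, h, conv_snd]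

lemma conv_append {α : Type*} (p u v : List α) :
    conv (p ++ u) (p ++ v) = p.map dbl ++ conv u v := by
  induction p with
  | nil => rfl
  | cons a p ih => simp [conv, dbl, ih]

lemma conv_swap {α : Type*} (x y : List α) : (conv x y).map Prod.swap = conv y x := by
  induction x, y using conv.induct <;> simp_all [conv]

/-- The padded pair word of length `n`. -/
def pad {α : Type*} (n : ℕ) (x y : List α) : List (Option α × Option α) :=
  (List.range n).map fun i => (x[i]?, y[i]?)

lemma pad_succ {α : Type*} (n : ℕ) (x y : List α) :
    pad (n + 1) x y = pad n x y ++ [(x[n]?, y[n]?)] := by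
  simp [pad, List.range_succ]

lemma pad_succ' {α : Type*} (n : ℕ) (x y : List α) :
    pad (n + 1) x y = (x[0]?, y[0]?) :: pad n x.tail y.tail := by
  simp [pad, List.range_succ_eq_map, Function.comp_def]

lemma conv_eq_pad {α : Type*} (x y : List α) :
    conv x y = pad (max x.length y.length) x y := by
  induction x, y using conv.induct with
  | case1 => simp [conv, pad]
  | case2 a as ih => simp_all [conv, pad_succ']
  | case3 b bs ih => simp_all [conv, pad_succ']
  | case4 a as b bs ih =>
    simp only [conv, List.length_cons, Nat.succ_max_succ, pad_succ', ih]
    simp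

/-- A recogniser for a relation that reads pairs with arbitrary trailing padding. -/
def Recog {α σ : Type*} (D : DFA (Option α × Option α) σ) (R : Set (List α × List α)) : Prop :=
  ∀ x y n, x.length ≤ n → y.length ≤ n → (D.eval (pad n x y) ∈ D.accept ↔ (x, y) ∈ R)

open Classical in
lemma recog_of_regularRel {α : Type*} {R : Set (List α × List α)} (hR : IsRegularRel R) :
    ∃ (σ : Type) (_ : Fintype σ) (D : DFA (Option α × Option α) σ), Recog D R := by
  obtain ⟨σ, hσ, D, hD⟩ := hR
  let D' : DFA (Option α × Option α) σ :=
    ⟨fun s b => if b = (none, none) then s else D.step s b, D.start, D.accept⟩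
  refine ⟨σ, hσ, D', ?_⟩
  have h1 : ∀ (x y : List α) n, n ≤ max x.length y.length →
      D'.eval (pad n x y) = D.eval (pad n x y) := by
    intro x y n
    induction n with
    | zero => intro _; rfl
    | succ n ih =>
      intro hn
      rw [pad_succ, DFA.eval_append_singleton, DFA.eval_append_singleton, ih (by omega)]
      change (if _ then _ else _) = _
      rw [if_neg]
      simp only [Prod.mk.injEq, List.getElem?_eq_none_iff]
      omega
  have h2 : ∀ (x y : List α) k, D'.eval (pad (max x.length y.length + k) x y) =
      D.eval (conv x y) := by
    intro x y k
    induction k with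
    | zero => rw [conv_eq_pad]; exact h1 x y _ le_rfl
    | succ k ih =>
      rw [← add_assoc, pad_succ, DFA.eval_append_singleton, ih]
      change (if _ then _ else _) = _
      rw [if_pos]
      simp only [Prod.mk.injEq, List.getElem?_eq_none_iff]
      omega
  intro x y n hx hy
  obtain ⟨k, rfl⟩ := Nat.exists_eq_add_of_le (max_le hx hy)
  rw [h2]
  change D.eval (conv x y) ∈ D.accept ↔ _
  rw [← DFA.mem_accepts, hD]
  constructor
  · rintro ⟨⟨x', y'⟩, hp, h⟩
    obtain ⟨rfl, rfl⟩ := conv_inj h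
    exact hp
  · intro h
    exact ⟨(x, y), h, rfl⟩

/-- Syntactic validity of a padded pair word. -/
def Valid {α : Type*} (w : List (Option α × Option α)) : Prop :=
  (∀ p ∈ w, p ≠ (none, none)) ∧
    w.Pairwise (fun p q => (p.1 = none → q.1 = none) ∧ (p.2 = none → q.2 = none))

lemma valid_conv {α : Type*} (x y : List α) : Valid (conv x y) := by
  have hl : ∀ z : List α, ∀ p ∈ conv z [], p.2 = none := by
    intro z
    induction z with
    | nil => simp [conv]
    | cons a z ih => simp only [conv, List.mem_cons]; rintro p (rfl | h); · rfl
                     exact ih p h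
  have hr : ∀ z : List α, ∀ p ∈ conv [] z, p.1 = none := by
    intro z
    induction z with
    | nil => simp [conv]
    | cons a z ih => simp only [conv, List.mem_cons]; rintro p (rfl | h); · rfl
                     exact ih p h
  induction x, y using conv.induct with
  | case1 => simp [conv, Valid]
  | case2 a as ih =>
    refine ⟨?_, ?_⟩
    · simp only [conv, List.mem_cons]
      rintro p (rfl | h)
      · simp
      · exact ih.1 p h
    · simp only [conv, List.pairwise_cons]
      exact ⟨fun p hp => ⟨by simp, fun _ => hl _ _ hp⟩, ih.2⟩
  | case3 b bs ih =>
    refine ⟨?_, ?_⟩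
    · simp only [conv, List.mem_cons]
      rintro p (rfl | h)
      · simp
      · exact ih.1 p h
    · simp only [conv, List.pairwise_cons]
      exact ⟨fun p hp => ⟨fun _ => hr _ _ hp, by simp⟩, ih.2⟩
  | case4 a as b bs ih =>
    refine ⟨?_, ?_⟩
    · simp only [conv, List.mem_cons]
      rintro p (rfl | h)
      · simp
      · exact ih.1 p h
    · simp only [conv, List.pairwise_cons]
      exact ⟨fun p hp => by simp, ih.2⟩

lemma conv_of_valid {α : Type*} (w : List (Option α × Option α)) (h : Valid w) :
    ∃ x y, w = conv x y := by
  induction w with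
  | nil => exact ⟨[], [], by simp [conv]⟩
  | cons p w ih =>
    obtain ⟨h1, h2⟩ := h
    rw [List.pairwise_cons] at h2
    obtain ⟨x, y, rfl⟩ := ih ⟨fun q hq => h1 q (List.mem_cons_of_mem _ hq), h2.2⟩
    obtain ⟨p1, p2⟩ := p
    cases p1 with
    | none =>
      cases p2 with
      | none => exact absurd rfl (h1 _ List.mem_cons_self)
      | some b =>
        have hx : x = [] := by
          rw [← conv_fst x y, List.filterMap_eq_nil_iff]
          intro q hq
          exact (h2.1 q hq).1 rfl
        subst hx
        exact ⟨[], b :: y, by simp [conv]⟩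
    | some a =>
      cases p2 with
      | none =>
        have hy : y = [] := by
          rw [← conv_snd x y, List.filterMap_eq_nil_iff]
          intro q hq
          exact (h2.1 q hq).2 rfl
        subst hy
        exact ⟨a :: x, [], by simp [conv]⟩
      | some b => exact ⟨a :: x, b :: y, by simp [conv]⟩

lemma isRegular_valid {α : Type*} :
    Language.IsRegular ({w | Valid w} : Language (Option α × Option α)) := by
  refine isRegular_of_invariant (X := Prop × Prop × Prop) _
    (fun w => (Valid w, (∃ p ∈ w, p.1 = none), (∃ p ∈ w, p.2 = none))) (Set.toFinite _) ?_ ?_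
  · intro u v a h
    have key : ∀ u : List (Option α × Option α), Valid (u ++ [a]) ↔
        (Valid u ∧ a ≠ (none, none) ∧ ((∃ p ∈ u, p.1 = none) → a.1 = none) ∧
          ((∃ p ∈ u, p.2 = none) → a.2 = none)) := by
      intro u
      simp only [Valid, List.pairwise_append, List.mem_append, List.mem_singleton]
      constructor
      · rintro ⟨h1, h2, -, h3⟩
        refine ⟨⟨fun p hp => h1 p (Or.inl hp), h2⟩, h1 a (Or.inr rfl), ?_, ?_⟩
        · rintro ⟨p, hp, hn⟩; exact (h3 p hp a rfl).1 hn
        · rintro ⟨p, hp, hn⟩; exact (h3 p hp a rfl).2 hn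
      · rintro ⟨⟨h1, h2⟩, h3, h4, h5⟩
        refine ⟨?_, h2, by simp, ?_⟩
        · rintro p (hp | rfl)
          · exact h1 p hp
          · exact h3
        · rintro p hp _ rfl
          exact ⟨fun hn => h4 ⟨p, hp, hn⟩, fun hn => h5 ⟨p, hp, hn⟩⟩
    simp only [Prod.mk.injEq, key] at h ⊢
    obtain ⟨h1, h2, h3⟩ := h
    have e : ∀ (P : Option α × Option α → Prop) (u : List (Option α × Option α)),
        (∃ p ∈ u ++ [a], P p) = ((∃ p ∈ u, P p) ∨ P a) := by
      intro P u
      simp [or_and_right, exists_or]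
    rw [e (fun p => p.1 = none), e (fun p => p.1 = none), e (fun p => p.2 = none),
      e (fun p => p.2 = none), h1, h2, h3]
    exact ⟨rfl, rfl, rfl⟩
  · intro u v h hu
    simp only [Prod.mk.injEq] at h
    exact h.1.mp hu

lemma regularRel_of_recog {α σ : Type*} [Finite σ] {D : DFA (Option α × Option α) σ}
    {R : Set (List α × List α)} (hD : Recog D R) : IsRegularRel R := by
  have hacc : D.accepts.IsRegular := by
    refine isRegular_of_invariant _ D.eval (Set.toFinite _) ?_ ?_
    · intro u v a h; simp [h]
    · intro u v h hu
      rw [DFA.mem_accepts] at hu ⊢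
      rwa [← h]
  unfold IsRegularRel
  refine isRegular_congr (hacc.inf isRegular_valid) fun w => ?_
  change (∃ p ∈ R, w = conv p.1 p.2) ↔ (w ∈ D.accepts ∧ Valid w)
  constructor
  · rintro ⟨⟨x, y⟩, hp, rfl⟩
    refine ⟨?_, valid_conv x y⟩
    rw [DFA.mem_accepts, conv_eq_pad]
    exact (hD x y _ (le_max_left _ _) (le_max_right _ _)).2 hp
  · rintro ⟨h1, h2⟩
    obtain ⟨x, y, rfl⟩ := conv_of_valid w h2
    refine ⟨(x, y), ?_, rfl⟩
    rw [DFA.mem_accepts, conv_eq_pad] at h1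
    exact (hD x y _ (le_max_left _ _) (le_max_right _ _)).1 h1

lemma regularRel_swap {α : Type*} {R : Set (List α × List α)} (hR : IsRegularRel R) :
    IsRegularRel {p : List α × List α | (p.2, p.1) ∈ R} := by
  obtain ⟨σ, hσ, D, hD⟩ := hR
  refine ⟨σ, hσ, D.comap Prod.swap, ?_⟩
  ext w
  rw [DFA.accepts_comap]
  change List.map Prod.swap w ∈ D.accepts ↔ _
  rw [hD]
  constructor
  · rintro ⟨⟨x, y⟩, hp, h⟩
    refine ⟨(y, x), hp, ?_⟩
    have := congrArg (List.map Prod.swap) h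
    rw [conv_swap] at this
    simpa using this
  · rintro ⟨⟨x, y⟩, hp, rfl⟩
    exact ⟨(y, x), hp, conv_swap _ _⟩

end CAG
namespace CAG

lemma pad_congr {α : Type*} {n : ℕ} {x y x' y' : List α} (hx : ∀ i < n, x[i]? = x'[i]?)
    (hy : ∀ i < n, y[i]? = y'[i]?) : pad n x y = pad n x' y' := by
  unfold pad
  apply List.map_congr_left
  intro i hi
  rw [List.mem_range] at hi
  rw [hx i hi, hy i hi]

lemma pad_add {α : Type*} (n k : ℕ) (x y : List α) :
    pad (n + k) x y = pad n x y ++ pad k (x.drop n) (y.drop n) := by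
  simp [pad, List.range_add, Function.comp_def]

lemma pad_swap {α : Type*} (n : ℕ) (x y : List α) :
    pad n y x = (pad n x y).map Prod.swap := by
  simp [pad, Function.comp_def]

/-- The subset automaton for the composition of two relations. -/
def compDFA {α σ τ : Type*} (D : DFA (Option α × Option α) σ) (E : DFA (Option α × Option α) τ) :
    DFA (Option α × Option α) (Set (σ × τ × Prop)) where
  step T c := {q | (∃ s t e, (s, t, e) ∈ T ∧ q = (D.step s (c.1, none), E.step t (none, c.2), True)) ∨
    ∃ s t b, (s, t, False) ∈ T ∧ q = (D.step s (c.1, some b), E.step t (some b, c.2), False)}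
  start := {(D.start, E.start, False)}
  accept := {T | ∃ s t e, (s, t, e) ∈ T ∧ ((s ∈ D.accept ∧ t ∈ E.accept) ∨
    (e = False ∧ ∃ u : List α, D.evalFrom s (pad u.length [] u) ∈ D.accept ∧
      E.evalFrom t (pad u.length u []) ∈ E.accept))}

lemma compDFA_eval {α σ τ : Type*} (D : DFA (Option α × Option α) σ)
    (E : DFA (Option α × Option α) τ) (x z : List α) (n : ℕ) :
    (compDFA D E).eval (pad n x z) =
      {q | ∃ y : List α, y.length ≤ n ∧
        q = (D.eval (pad n x y), E.eval (pad n y z), y.length < n)} := by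
  induction n with
  | zero =>
    ext q
    simp [pad, compDFA]
  | succ n ih =>
    rw [pad_succ, DFA.eval_append_singleton, ih]
    ext q
    constructor
    · rintro (⟨s, t, e, ⟨y, hy, h⟩, rfl⟩ | ⟨s, t, b, ⟨y, hy, h⟩, rfl⟩)
      · simp only [Prod.mk.injEq] at h
        obtain ⟨rfl, rfl, rfl⟩ := h
        refine ⟨y, by omega, ?_⟩
        have h1 : y[n]? = none := by simpa using hy
        simp only [pad_succ, DFA.eval_append_singleton, h1, Prod.mk.injEq, true_and]
        exact (eq_true (by omega)).symm
      · simp only [Prod.mk.injEq] at h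
        obtain ⟨rfl, rfl, he⟩ := h
        have hlen : y.length = n := by
          have : ¬ y.length < n := by rw [← he]; exact id
          omega
        refine ⟨y ++ [b], by simp [hlen], ?_⟩
        have h1 : (y ++ [b])[n]? = some b := by simp [← hlen]
        have h2 : ∀ i < n, y[i]? = (y ++ [b])[i]? := by
          intro i hi
          rw [List.getElem?_append_left (by omega)]
        simp only [pad_succ, DFA.eval_append_singleton, h1]
        rw [pad_congr (x := x) (fun _ _ => rfl) h2, pad_congr (y := z) h2 (fun _ _ => rfl)]
        simp [hlen]
    · rintro ⟨y, hy, rfl⟩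
      rcases Nat.lt_or_ge n y.length with hlt | hge
      · right
        have hlen : y.length = n + 1 := by omega
        have h1 : y[n]? = some (y[n]) := List.getElem?_eq_getElem hlt
        have h2 : ∀ i < n, (y.take n)[i]? = y[i]? := by
          intro i hi
          rw [List.getElem?_take_of_lt hi]
        refine ⟨D.eval (pad n x y), E.eval (pad n y z), y[n], ⟨y.take n, by simp, ?_⟩, ?_⟩
        · rw [pad_congr (x := x) (fun _ _ => rfl) h2, pad_congr (y := z) h2 (fun _ _ => rfl)]
          simp [hlen]
        · simp only [pad_succ, DFA.eval_append_singleton, h1, hlen, lt_irrefl]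
      · left
        refine ⟨_, _, _, ⟨y, hge, rfl⟩, ?_⟩
        have h1 : y[n]? = none := by simpa using hge
        simp only [pad_succ, DFA.eval_append_singleton, h1, Prod.mk.injEq, true_and]
        exact (eq_true (by omega))

lemma recog_comp {α σ τ : Type*} {D : DFA (Option α × Option α) σ}
    {E : DFA (Option α × Option α) τ} {R S : Set (List α × List α)}
    (hD : Recog D R) (hE : Recog E S) :
    Recog (compDFA D E) {p | ∃ y, (p.1, y) ∈ R ∧ (y, p.2) ∈ S} := by
  intro x z n hx hz
  rw [compDFA_eval]
  constructor
  · rintro ⟨s, t, e, ⟨y, hy, h⟩, hacc⟩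
    simp only [Prod.mk.injEq] at h
    obtain ⟨rfl, rfl, rfl⟩ := h
    rcases hacc with ⟨h1, h2⟩ | ⟨he, u, h1, h2⟩
    · exact ⟨y, (hD _ _ _ hx hy).1 h1, (hE _ _ _ hy hz).1 h2⟩
    · have hlen : y.length = n := by
        have : ¬ y.length < n := by rw [he]; exact id
        omega
      have e2 : ∀ i < n, y[i]? = (y ++ u)[i]? := by
        intro i hi
        rw [List.getElem?_append_left (by omega)]
      have hd : (y ++ u).drop n = u := by simp [← hlen]
      refine ⟨y ++ u, (hD _ _ (n + u.length) (Nat.le_add_right_of_le hx) (by simp [hlen])).1 ?_,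
        (hE _ _ (n + u.length) (by simp [hlen]) (Nat.le_add_right_of_le hz)).1 ?_⟩
      · rw [pad_add, List.drop_eq_nil_of_le hx, hd, DFA.eval, DFA.evalFrom_of_append,
          ← pad_congr (x := x) (fun _ _ => rfl) e2]
        exact h1
      · rw [pad_add, List.drop_eq_nil_of_le hz, hd, DFA.eval, DFA.evalFrom_of_append,
          ← pad_congr (y := z) e2 (fun _ _ => rfl)]
        exact h2
  · rintro ⟨y, h1, h2⟩
    rcases Nat.lt_or_ge n y.length with hlt | hge
    · have e2 : ∀ i < n, (y.take n)[i]? = y[i]? := by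
        intro i hi
        rw [List.getElem?_take_of_lt hi]
      refine ⟨_, _, _, ⟨y.take n, by simp, rfl⟩, Or.inr ⟨?_, y.drop n, ?_, ?_⟩⟩
      · simp; omega
      · have := (hD _ _ (n + (y.drop n).length) (Nat.le_add_right_of_le hx) (by simp; omega)).2 h1
        rw [pad_add, List.drop_eq_nil_of_le hx, DFA.eval, DFA.evalFrom_of_append] at this
        rw [pad_congr (x := x) (fun _ _ => rfl) e2]
        exact this
      · have := (hE _ _ (n + (y.drop n).length) (by simp; omega) (Nat.le_add_right_of_le hz)).2 h2
        rw [pad_add, List.drop_eq_nil_of_le hz, DFA.eval, DFA.evalFrom_of_append] at this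
        rw [pad_congr (y := z) e2 (fun _ _ => rfl)]
        exact this
    · exact ⟨_, _, _, ⟨y, hge, rfl⟩, Or.inl ⟨(hD _ _ _ hx hge).2 h1, (hE _ _ _ hge hz).2 h2⟩⟩

lemma regularRel_comp {α : Type*} {R S : Set (List α × List α)}
    (hR : IsRegularRel R) (hS : IsRegularRel S) :
    IsRegularRel {p : List α × List α | ∃ y, (p.1, y) ∈ R ∧ (y, p.2) ∈ S} := by
  obtain ⟨σ, _, D, hD⟩ := recog_of_regularRel hR
  obtain ⟨τ, _, E, hE⟩ := recog_of_regularRel hS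
  exact regularRel_of_recog (recog_comp hD hE)

/-- `{(w, w u) : w ∈ K}` is regular. -/
lemma regularRel_appendWord {α : Type*} {K : Language α} (hK : K.IsRegular) (u : List α) :
    IsRegularRel {p : List α × List α | p.1 ∈ K ∧ p.2 = p.1 ++ u} := by
  refine isRegular_congr (isRegular_append_word (isRegular_map_dbl hK) (conv [] u)) fun v => ?_
  constructor
  · rintro ⟨⟨x, y⟩, ⟨h1, h2⟩, rfl⟩
    dsimp only at h1 h2
    subst h2
    refine ⟨x.map dbl, ⟨x, h1, rfl⟩, ?_⟩
    simpa using conv_append x [] u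
  · rintro ⟨_, ⟨x, h1, rfl⟩, rfl⟩
    refine ⟨(x, x ++ u), ⟨h1, rfl⟩, ?_⟩
    simpa using (conv_append x [] u).symm

lemma regularRel_biUnion {α ι : Type*} {s : Set ι} (hs : s.Finite)
    (R : ι → Set (List α × List α)) (hR : ∀ i, IsRegularRel (R i)) :
    IsRegularRel {p | ∃ i ∈ s, p ∈ R i} := by
  refine isRegular_congr (isRegular_biUnion hs _ hR) fun v => ?_
  constructor
  · rintro ⟨p, ⟨i, hi, hp⟩, rfl⟩
    exact ⟨i, hi, p, hp, rfl⟩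
  · rintro ⟨i, hi, p, hp, rfl⟩
    exact ⟨p, ⟨i, hi, hp⟩, rfl⟩

lemma regularRel_congr {α : Type*} {R S : Set (List α × List α)} (hR : IsRegularRel R)
    (h : ∀ x y, (x, y) ∈ S ↔ (x, y) ∈ R) : IsRegularRel S := by
  have : S = R := by ext ⟨x, y⟩; exact h x y
  rwa [this]

section grp

variable {G : Type} [Group G] {A : Set G}

lemma eval_nil : eval A [] = 1 := rfl

lemma eval_cons (a : Alph A) (u : List (Alph A)) : eval A (a :: u) = a.1 * eval A u :=
  List.prod_cons

lemma eval_singleton (a : Alph A) : eval A [a] = a.1 := by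
  rw [eval_cons, eval_nil, mul_one]

lemma eval_append (u v : List (Alph A)) : eval A (u ++ v) = eval A u * eval A v := by
  induction u with
  | nil => rw [List.nil_append, eval_nil, one_mul]
  | cons a u ih => rw [List.cons_append, eval_cons, eval_cons, ih, mul_assoc]

lemma exists_word (hA : Subgroup.closure A = ⊤) (g : G) : ∃ w : List (Alph A), eval A w = g := by
  have hg : g ∈ Subgroup.closure A := by rw [hA]; trivial
  induction hg using Subgroup.closure_induction'' with
  | one => exact ⟨[], rfl⟩
  | mem x hx => exact ⟨[⟨x, Or.inl hx⟩], eval_singleton _⟩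
  | inv_mem x hx => exact ⟨[⟨x⁻¹, Or.inr (by simpa using hx)⟩], eval_singleton _⟩
  | mul x y _ _ hx hy =>
    obtain ⟨u, rfl⟩ := hx
    obtain ⟨v, rfl⟩ := hy
    exact ⟨u ++ v, eval_append u v⟩

lemma finite_ball (hfin : A.Finite) (hA : Subgroup.closure A = ⊤) (n : ℕ) :
    {g : G | wordLength A g ≤ n}.Finite := by
  have : Finite (Alph A) := (hfin.union hfin.inv).to_subtype
  refine ((List.finite_length_le (Alph A) n).image (eval A)).subset ?_
  intro g hg
  have hne : {n | ∃ w : List (Alph A), eval A w = g ∧ w.length = n}.Nonempty := by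
    obtain ⟨w, hw⟩ := exists_word hA g
    exact ⟨_, w, hw, rfl⟩
  obtain ⟨w, hw, hl⟩ := Nat.sInf_mem hne
  refine ⟨w, ?_, hw⟩
  change w.length ≤ n
  rw [hl]
  exact hg

lemma regularRel_mul (hA : Subgroup.closure A = ⊤) {L : Language (Alph A)}
    {ψ : List (Alph A) → G} (h : IsCayleyAutomaticRep A L ψ) (g : G) :
    IsRegularRel {p : List (Alph A) × List (Alph A) |
      p.1 ∈ L ∧ p.2 ∈ L ∧ ψ p.2 = ψ p.1 * g} := by
  obtain ⟨hL, hb, hR⟩ := h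
  have hg : g ∈ Subgroup.closure A := by rw [hA]; trivial
  induction hg using Subgroup.closure_induction with
  | mem x hx => exact hR x hx
  | one =>
    refine regularRel_congr (regularRel_appendWord hL []) fun x y => ?_
    simp only [Set.mem_ofPred_eq, mul_one, List.append_nil]
    constructor
    · rintro ⟨h1, h2, h3⟩
      exact ⟨h1, hb.injOn h2 h1 h3⟩
    · rintro ⟨h1, rfl⟩
      exact ⟨h1, h1, rfl⟩
  | mul a b _ _ ha hb' =>
    refine regularRel_congr (regularRel_comp ha hb') fun x y => ?_
    simp only [Set.mem_ofPred_eq]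
    constructor
    · rintro ⟨h1, h2, h3⟩
      obtain ⟨z, hz, e⟩ := hb.surjOn (Set.mem_univ (ψ x * a))
      exact ⟨z, ⟨h1, hz, e⟩, hz, h2, by rw [h3, e, mul_assoc]⟩
    · rintro ⟨z, ⟨h1, h2, h3⟩, -, h4, h5⟩
      exact ⟨h1, h4, by rw [h5, h3, mul_assoc]⟩
  | inv a _ ha =>
    refine regularRel_congr (regularRel_swap ha) fun x y => ?_
    simp only [Set.mem_ofPred_eq]
    constructor
    · rintro ⟨h1, h2, h3⟩
      exact ⟨h2, h1, by rw [h3]; group⟩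
    · rintro ⟨h1, h2, h3⟩
      exact ⟨h2, h1, by rw [h3]; group⟩

open Classical in
/-- The defect `π(w)⁻¹ ψ(w)` is a finite-state function of `w`, if it takes finitely many values. -/
lemma isRegular_defect (hfin : A.Finite) (hA : Subgroup.closure A = ⊤) {L : Language (Alph A)}
    {ψ : List (Alph A) → G} (h : IsCayleyAutomaticRep A L ψ) {B : Set G} (hB : B.Finite)
    (hdef : ∀ w ∈ L, (eval A w)⁻¹ * ψ w ∈ B) (b : G) :
    Language.IsRegular ({w | w ∈ L ∧ (eval A w)⁻¹ * ψ w = b} : Language (Alph A)) := by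
  have hmul := regularRel_mul hA h
  obtain ⟨⟨σ, _, D, hD⟩, hb, -⟩ := h
  have hmem : ∀ u, u ∈ L ↔ D.eval u ∈ D.accept := by intro u; rw [← hD]; rfl
  choose τ hτ E hE using hmul
  have hE' : ∀ g x y, (E g).eval (conv x y) ∈ (E g).accept ↔
      (x ∈ L ∧ y ∈ L ∧ ψ y = ψ x * g) := by
    intro g x y
    rw [← DFA.mem_accepts, hE]
    constructor
    · rintro ⟨⟨x', y'⟩, hp, e⟩
      obtain ⟨rfl, rfl⟩ := conv_inj e
      exact hp
    · intro hp
      exact ⟨(x, y), hp, rfl⟩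
  -- a completing word for each live state
  obtain ⟨t, ht, ht0⟩ : ∃ t : σ → List (Alph A),
      (∀ q, (∃ s, D.evalFrom q s ∈ D.accept) → D.evalFrom q (t q) ∈ D.accept) ∧
      (∀ q, q ∈ D.accept → t q = []) := by
    have : ∀ q : σ, ∃ u : List (Alph A),
        ((∃ s, D.evalFrom q s ∈ D.accept) → D.evalFrom q u ∈ D.accept) ∧
        (q ∈ D.accept → u = []) := by
      intro q
      by_cases hq : q ∈ D.accept
      · exact ⟨[], fun _ => hq, fun _ => rfl⟩
      · by_cases hs : ∃ s, D.evalFrom q s ∈ D.accept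
        · obtain ⟨s, hs⟩ := hs
          exact ⟨s, fun _ => hs, fun h => absurd h hq⟩
        · exact ⟨[], fun h => absurd h hs, fun h => absurd h hq⟩
    choose t ht using this
    exact ⟨t, fun q => (ht q).1, fun q => (ht q).2⟩
  let live : σ → Prop := fun q => ∃ s, D.evalFrom q s ∈ D.accept
  let c : List (Alph A) → List (Alph A) := fun p => p ++ t (D.eval p)
  let β : List (Alph A) → G := fun p =>
    if live (D.eval p) then (eval A p)⁻¹ * ψ (c p) else 1
  have hc : ∀ p, live (D.eval p) → c p ∈ L := by
    intro p hp
    rw [hmem]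
    change D.evalFrom D.start (p ++ t (D.eval p)) ∈ D.accept
    rw [DFA.evalFrom_of_append]
    exact ht _ hp
  have hlive : ∀ p a, live (D.eval (p ++ [a])) → live (D.eval p) := by
    rintro p a ⟨s, hs⟩
    rw [DFA.eval_append_singleton] at hs
    exact ⟨a :: s, hs⟩
  -- the finite set of values of `β`
  obtain ⟨V, hV, hβV⟩ : ∃ V : Set G, V.Finite ∧ ∀ p, β p ∈ V := by
    refine ⟨insert 1 (Set.image2 (fun q b => eval A (t q) * b) Set.univ B),
      (Set.Finite.image2 _ Set.finite_univ hB).insert _, ?_⟩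
    intro p
    by_cases hp : live (D.eval p)
    · right
      refine ⟨D.eval p, trivial, _, hdef _ (hc p hp), ?_⟩
      simp only [β, if_pos hp, c, eval_append]
      group
    · left
      simp [β, hp]
  have hAlph : Finite (Alph A) := (hfin.union hfin.inv).to_subtype
  -- the finite set of relevant differences
  obtain ⟨Γ, hΓ, hβΓ⟩ : ∃ Γ : Set G, Γ.Finite ∧
      ∀ p (a : Alph A), (β p)⁻¹ * (a.1 * β (p ++ [a])) ∈ Γ := by
    refine ⟨Set.image2 (fun v w => v⁻¹ * w) V
      (Set.image2 (fun (a : Alph A) v => a.1 * v) Set.univ V),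
      hV.image2 _ (Set.finite_univ.image2 _ hV), ?_⟩
    intro p a
    exact ⟨_, hβV p, _, ⟨a, trivial, _, hβV _, rfl⟩, rfl⟩
  have hΓ' : Finite Γ := hΓ.to_subtype
  let X := σ × ((g : Γ) → τ g.1) × G
  let F : List (Alph A) → X := fun p => (D.eval p, fun g => (E g.1).eval (p.map dbl), β p)
  have hfinτ : ∀ g, Finite (τ g) := fun g => @Finite.of_fintype _ (hτ g)
  refine isRegular_of_invariant _ F ?_ ?_ ?_
  · refine (Set.Finite.prod (Set.finite_univ (α := σ))
      (Set.Finite.prod (Set.finite_univ (α := (g : Γ) → τ g.1)) hV)).subset ?_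
    rintro _ ⟨p, rfl⟩
    exact ⟨trivial, trivial, hβV p⟩
  · intro u v a huv
    have h1 : D.eval u = D.eval v := congrArg Prod.fst huv
    have h2 : (fun g : Γ => (E g.1).eval (u.map dbl)) = fun g : Γ => (E g.1).eval (v.map dbl) :=
      congrArg (fun q : X => q.2.1) huv
    have h3 : β u = β v := congrArg (fun q : X => q.2.2) huv
    have h1' : D.eval (u ++ [a]) = D.eval (v ++ [a]) := by simp [h1]
    refine Prod.ext h1' (Prod.ext ?_ ?_)
    · funext g
      change (E g.1).eval ((u ++ [a]).map dbl) = (E g.1).eval ((v ++ [a]).map dbl)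
      have : (E g.1).eval (u.map dbl) = (E g.1).eval (v.map dbl) := congrFun h2 g
      simp only [List.map_append, List.map_cons, List.map_nil, DFA.eval_append_singleton]
      rw [this]
    · change β (u ++ [a]) = β (v ++ [a])
      by_cases hl : live (D.eval (u ++ [a]))
      · have hl' : live (D.eval (v ++ [a])) := h1' ▸ hl
        have hu := hlive _ _ hl
        have hv := hlive _ _ hl'
        have eu : ψ (c u) = eval A u * β u := by simp only [β, if_pos hu]; group
        have ev : ψ (c v) = eval A v * β v := by simp only [β, if_pos hv]; group
        have eu' : ψ (c (u ++ [a])) = eval A u * (a.1 * β (u ++ [a])) := by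
          simp only [β, if_pos hl, eval_append, eval_singleton]; group
        have ev' : ψ (c (v ++ [a])) = eval A v * (a.1 * β (v ++ [a])) := by
          simp only [β, if_pos hl', eval_append, eval_singleton]; group
        let g : Γ := ⟨(β u)⁻¹ * (a.1 * β (u ++ [a])), hβΓ u a⟩
        have hcv : ∀ p, conv (c p) (c (p ++ [a])) =
            p.map dbl ++ conv (t (D.eval p)) (a :: t (D.eval (p ++ [a]))) := by
          intro p
          rw [← conv_append]
          simp [c]
        have hgu : (E g.1).eval (conv (c u) (c (u ++ [a]))) ∈ (E g.1).accept := by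
          rw [hE']
          refine ⟨hc _ hu, hc _ hl, ?_⟩
          rw [eu, eu']
          simp only [g]
          group
        have hgv : (E g.1).eval (conv (c v) (c (v ++ [a]))) ∈ (E g.1).accept := by
          rw [hcv, DFA.eval, DFA.evalFrom_of_append] at hgu ⊢
          have h2g : (E g.1).evalFrom (E g.1).start (u.map dbl) =
            (E g.1).evalFrom (E g.1).start (v.map dbl) := congrFun h2 g
          rw [← h2g, ← h1, ← h1']
          exact hgu
        obtain ⟨-, -, hψ⟩ := (hE' _ _ _).1 hgv
        rw [ev, ev', mul_assoc] at hψ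
        have h4 := mul_left_cancel hψ
        simp only [g] at h4
        rw [← h3, mul_inv_cancel_left] at h4
        exact (mul_left_cancel h4).symm
      · have hl' : ¬ live (D.eval (v ++ [a])) := h1' ▸ hl
        simp only [β, if_neg hl, if_neg hl']
  · rintro u v huv ⟨hu, hub⟩
    have h1 : D.eval u = D.eval v := congrArg Prod.fst huv
    have h3 : β u = β v := congrArg (fun q : X => q.2.2) huv
    have hβ : ∀ p ∈ L, β p = (eval A p)⁻¹ * ψ p := by
      intro p hp
      rw [hmem] at hp
      have hl : live (D.eval p) := ⟨[], hp⟩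
      simp only [β, if_pos hl, c, ht0 _ hp, List.append_nil]
    have hv : v ∈ L := by rw [hmem] at hu ⊢; rwa [← h1]
    refine ⟨hv, ?_⟩
    rw [← hβ v hv, ← h3, hβ u hu, hub]

lemma isAutomatic_of_defect (hfin : A.Finite) (hA : Subgroup.closure A = ⊤)
    {L : Language (Alph A)} {ψ : List (Alph A) → G} (h : IsCayleyAutomaticRep A L ψ) {B : Set G}
    (hB : B.Finite) (hdef : ∀ w ∈ L, (eval A w)⁻¹ * ψ w ∈ B) : IsAutomatic A := by
  have hreg := isRegular_defect hfin hA h hB hdef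
  obtain ⟨hL, hb, hR⟩ := h
  choose r hr using exists_word hA
  let δ : List (Alph A) → List (Alph A) := fun w => w ++ r ((eval A w)⁻¹ * ψ w)
  have hδ : ∀ w, eval A (δ w) = ψ w := by
    intro w
    simp only [δ, eval_append, hr]
    group
  let L' : Language (Alph A) := {v | ∃ w ∈ L, v = δ w}
  have hL' : L'.IsRegular := by
    refine isRegular_congr (isRegular_biUnion hB _
      (fun b => isRegular_append_word (hreg b) (r b))) fun v => ?_
    constructor
    · rintro ⟨w, hw, rfl⟩
      exact ⟨_, hdef w hw, w, ⟨hw, rfl⟩, rfl⟩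
    · rintro ⟨b, hb, w, ⟨hw, rfl⟩, rfl⟩
      exact ⟨w, hw, rfl⟩
  have hT : IsRegularRel {p : List (Alph A) × List (Alph A) | p.1 ∈ L ∧ p.2 = δ p.1} := by
    refine regularRel_congr (regularRel_biUnion hB _
      (fun b => regularRel_appendWord (hreg b) (r b))) fun x y => ?_
    constructor
    · rintro ⟨hx, hy⟩
      exact ⟨_, hdef x hx, ⟨hx, rfl⟩, hy⟩
    · rintro ⟨b, hb, ⟨hx, rfl⟩, hy⟩
      exact ⟨hx, hy⟩
  refine ⟨L', hL', ⟨fun _ _ => trivial, ?_, ?_⟩, ?_⟩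
  · rintro _ ⟨w, hw, rfl⟩ _ ⟨w', hw', rfl⟩ e
    rw [hδ, hδ] at e
    rw [hb.injOn hw hw' e]
  · intro g _
    obtain ⟨w, hw, e⟩ := hb.surjOn (Set.mem_univ g)
    exact ⟨δ w, ⟨w, hw, rfl⟩, by rw [hδ, e]⟩
  · intro a ha
    refine regularRel_congr (regularRel_comp (regularRel_comp (regularRel_swap hT) (hR a ha)) hT)
      fun x y => ?_
    constructor
    · rintro ⟨⟨w, hw, hx⟩, ⟨w', hw', hy⟩, e⟩
      dsimp only at hx hy e
      subst hx hy
      rw [hδ, hδ] at e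
      exact ⟨w', ⟨w, ⟨hw, rfl⟩, hw, hw', e⟩, hw', rfl⟩
    · rintro ⟨w', ⟨w, ⟨hw, hx⟩, -, -, e⟩, hw', hy⟩
      dsimp only at hx hy e
      subst hx hy
      refine ⟨⟨w, hw, rfl⟩, ⟨w', hw', rfl⟩, ?_⟩
      change eval A (δ w') = eval A (δ w) * a
      rw [hδ, hδ, e]

lemma isAutomatic_of_inB (hfin : A.Finite) (hA : Subgroup.closure A = ⊤) (d : FFun)
    (hd : ∃ C : ℝ, ∀ n, d.Q ≤ n → d.toFun n ≤ C) (h : InB A d) : IsAutomatic A := by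
  obtain ⟨C, hC⟩ := hd
  obtain ⟨L, ψ, hrep, K, M, N, hK, hM, hN, hQ, hbd⟩ := h
  refine isAutomatic_of_defect hfin hA hrep (finite_ball hfin hA ⌊K * C⌋₊) ?_
  intro w hw
  have h1 := hbd (max N w.length) (le_max_left _ _) w hw (le_max_right _ _)
  have h2 : d.toFun (M * max N w.length) ≤ C := by
    apply hC
    calc d.Q ≤ N := hQ
      _ ≤ max N w.length := le_max_left _ _
      _ ≤ M * max N w.length := Nat.le_mul_of_pos_left _ hM
  have h3 : (cayleyDist A (eval A w) (ψ w) : ℝ) ≤ K * C :=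
    h1.trans (mul_le_mul_of_nonneg_left h2 (Nat.cast_nonneg K))
  exact Nat.le_floor h3

lemma inB_of_isAutomatic (d : FFun) (h : IsAutomatic A) : InB A d := by
  obtain ⟨L, hL⟩ := h
  refine ⟨L, eval A, hL, 1, 1, d.Q + 1, one_pos, one_pos, Nat.succ_pos _, Nat.le_succ _, ?_⟩
  intro n hn w _ _
  have h0 : cayleyDist A (eval A w) (eval A w) = 0 := by
    have : (0 : ℕ) ∈ {n | ∃ w : List (Alph A), eval A w = (1 : G) ∧ w.length = n} :=
      ⟨[], rfl, rfl⟩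
    rw [cayleyDist, inv_mul_cancel]
    exact Nat.le_zero.1 (Nat.sInf_le this)
  rw [h0]
  have := d.nonneg (1 * n) (by omega)
  simpa using this

end grp
end CAG

open CAG in
/-- If `d ∈ 𝔉` is bounded, then `ℬ_d` equals the class of automatic groups; in particular,
if for some `f ∈ 𝔉` the class `ℬ_f` contains a non-automatic group, then `f` is unbounded. -/
theorem classB_bounded_eq_automatic
    (d : FFun) (hd : ∃ C : ℝ, ∀ n, d.Q ≤ n → d.toFun n ≤ C) :
    (∀ (G : Type) (_ : Group G) (A : Set G), A.Finite → Subgroup.closure A = ⊤ →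
        (InB A d ↔ IsAutomatic A)) ∧
    (∀ (f : FFun) (G : Type) (_ : Group G) (A : Set G), A.Finite → Subgroup.closure A = ⊤ →
        InB A f → ¬ IsAutomatic A → ¬ ∃ C : ℝ, ∀ n, f.Q ≤ n → f.toFun n ≤ C) := by
  constructor
  · intro G _ A hfin hA
    exact ⟨isAutomatic_of_inB hfin hA d hd, inB_of_isAutomatic d⟩
  · intro f G _ A hfin hA hB hn hf
    exact hn (isAutomatic_of_inB hfin hA f hf hB)
end

section
/- For integers p, q with 1 ≤ p < q, there exist constants C₁, C₂, D₁, D₂ > 0 such that for every element g of BS(p,q) written in its unique normal form g = w̃(a,t)·a^k (w̃ a freely reduced word over {t, at, …, a^{q−1}t, t⁻¹, at⁻¹, …, a^{p−1}t⁻¹}, k ∈ ℤ) one has C₁·(|w̃| + log(|k|+1)) − D₁ ≤ d_{\{a,t\}}(g) ≤ C₂·(|w̃| + log(|k|+1)) + D₂, where |w̃| is the number of blocks in w̃ and d_{\{a,t\}}(g) is the word length of g with respect to the generating set {a,t}. -/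
namespace CAG

/-- The defining relation of the Baumslag–Solitar group `BS(p,q) = ⟨a,t | t aᵖ t⁻¹ = a^q⟩`,
with `a` the generator `0` and `t` the generator `1` of the free group on two generators. -/
def BSRels (p q : ℕ) : Set (FreeGroup (Fin 2)) :=
  {FreeGroup.of 1 * FreeGroup.of 0 ^ p * (FreeGroup.of 1)⁻¹ * (FreeGroup.of 0 ^ q)⁻¹}

/-- The Baumslag–Solitar group `BS(p,q) = ⟨a,t | t aᵖ t⁻¹ = a^q⟩`. -/
abbrev BS (p q : ℕ) := PresentedGroup (BSRels p q)

/-- The generator `a` of `BS(p,q)`. -/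
def BS.a (p q : ℕ) : BS p q := PresentedGroup.of 0

/-- The generator `t` of `BS(p,q)`. -/
def BS.t (p q : ℕ) : BS p q := PresentedGroup.of 1

/-- The alphabet of blocks `{t, at, …, a^{q-1}t, t⁻¹, at⁻¹, …, a^{p-1}t⁻¹}`:
`.inl i` stands for `aⁱt` (`0 ≤ i < q`) and `.inr j` stands for `aʲt⁻¹` (`0 ≤ j < p`). -/
abbrev BSBlock (p q : ℕ) := Fin q ⊕ Fin p

/-- The word in the letters `a, t` (elements of `Fin 2 × Bool`, the letter `(x, b)` standing
for `x` if `b = true` and `x⁻¹` if `b = false`) spelled by a single block. -/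
def BSBlock.letters {p q : ℕ} : BSBlock p q → List (Fin 2 × Bool)
  | .inl i => List.replicate i.val ((0 : Fin 2), true) ++ [((1 : Fin 2), true)]
  | .inr j => List.replicate j.val ((0 : Fin 2), true) ++ [((1 : Fin 2), false)]

/-- The word in the letters `a, t` spelled by a sequence of blocks. -/
def BSBlockWord {p q : ℕ} (bs : List (BSBlock p q)) : List (Fin 2 × Bool) :=
  (bs.map BSBlock.letters).flatten

/-- A sequence of blocks is freely reduced if the word in `a, t` it spells is freely
reduced, i.e. it contains no subword `x x⁻¹` or `x⁻¹ x`. -/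
def BSFreelyReduced {p q : ℕ} (bs : List (BSBlock p q)) : Prop :=
  FreeGroup.reduce (BSBlockWord bs) = BSBlockWord bs

/-- The element of `BS(p,q)` represented by a single block. -/
def BSBlock.elem {p q : ℕ} : BSBlock p q → BS p q
  | .inl i => BS.a p q ^ i.val * BS.t p q
  | .inr j => BS.a p q ^ j.val * (BS.t p q)⁻¹

end CAG

namespace CAG

section helpers

variable {p q : ℕ}

/-- `b` may directly follow `c`. -/
def BSOk : BSBlock p q → BSBlock p q → Prop
  | .inl i, .inr _ => i.val ≠ 0
  | .inr j, .inl _ => j.val ≠ 0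
  | .inl _, .inl _ => True
  | .inr _, .inr _ => True

/-- Remainder as an element of `Fin n`. -/
def BSrem (n : ℕ) (hn : 0 < n) (k : ℤ) : Fin n :=
  ⟨(k % n).toNat, by
    have h1 := Int.emod_nonneg k (b := (n : ℤ)) (by omega)
    have h2 := Int.emod_lt_of_pos k (b := (n : ℤ)) (by omega)
    omega⟩

lemma BSrem_val (n : ℕ) (hn : 0 < n) (k : ℤ) : ((BSrem n hn k).val : ℤ) = k % n := by
  have h1 := Int.emod_nonneg k (b := (n : ℤ)) (by omega)
  simp [BSrem, h1]

lemma BSrem_add (n : ℕ) (hn : 0 < n) (i : Fin n) (m : ℤ) :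
    BSrem n hn (i.val + n * m) = i := by
  apply Fin.ext
  zify
  rw [BSrem_val, Int.add_mul_emod_self_left]
  exact Int.emod_eq_of_lt (by omega) (by have := i.2; omega)

lemma BSdiv_add (n : ℕ) (hn : 0 < n) (i : Fin n) (m : ℤ) :
    ((i.val : ℤ) + n * m) / n = m := by
  rw [Int.add_mul_ediv_left _ _ (by omega), Int.ediv_eq_zero_of_lt (by omega)
    (by have := i.2; omega)]
  simp

lemma BSrem_spec (n : ℕ) (hn : 0 < n) (k : ℤ) :
    ((BSrem n hn k).val : ℤ) + n * (k / n) = k := by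
  rw [BSrem_val]; exact Int.emod_add_mul_ediv k n

/-- right multiplication by `t` (list of blocks reversed) -/
def BSTf (hq : 0 < q) : List (BSBlock p q) × ℤ → List (BSBlock p q) × ℤ
  | (.inr j :: l, k) =>
      if (BSrem q hq k).val = 0 then (l, j.val + p * (k / q))
      else (.inl (BSrem q hq k) :: .inr j :: l, p * (k / q))
  | (.inl j :: l, k) => (.inl (BSrem q hq k) :: .inl j :: l, p * (k / q))
  | ([], k) => ([.inl (BSrem q hq k)], p * (k / q))

/-- right multiplication by `t⁻¹` (list of blocks reversed) -/
def BSTi (hp : 0 < p) : List (BSBlock p q) × ℤ → List (BSBlock p q) × ℤ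
  | (.inl i :: l, k) =>
      if (BSrem p hp k).val = 0 then (l, i.val + q * (k / p))
      else (.inr (BSrem p hp k) :: .inl i :: l, q * (k / p))
  | (.inr i :: l, k) => (.inr (BSrem p hp k) :: .inr i :: l, q * (k / p))
  | ([], k) => ([.inr (BSrem p hp k)], q * (k / p))

lemma BSTf_chain (hq : 0 < q) (x : List (BSBlock p q) × ℤ) (h : x.1.IsChain BSOk) :
    (BSTf hq x).1.IsChain BSOk := by
  obtain ⟨l, k⟩ := x
  rcases l with _ | ⟨i | j, l⟩
  · simp [BSTf]
  · simp only [BSTf, List.isChain_cons_cons]; exact ⟨trivial, h⟩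
  · simp only [BSTf]
    split_ifs with h0
    · exact h.tail
    · simp only [List.isChain_cons_cons]; exact ⟨h0, h⟩

lemma BSTi_chain (hp : 0 < p) (x : List (BSBlock p q) × ℤ) (h : x.1.IsChain BSOk) :
    (BSTi hp x).1.IsChain BSOk := by
  obtain ⟨l, k⟩ := x
  rcases l with _ | ⟨i | j, l⟩
  · simp [BSTi]
  · simp only [BSTi]
    split_ifs with h0
    · exact h.tail
    · simp only [List.isChain_cons_cons]; exact ⟨h0, h⟩
  · simp only [BSTi, List.isChain_cons_cons]; exact ⟨trivial, h⟩

lemma BSrem_mul (n : ℕ) (hn : 0 < n) (m : ℤ) : (BSrem n hn (n * m)).val = 0 := by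
  have := BSrem_add n hn ⟨0, hn⟩ m
  simp only [Nat.cast_zero, zero_add] at this
  rw [this]

lemma BSdiv_mul (n : ℕ) (hn : 0 < n) (m : ℤ) : ((n : ℤ) * m) / n = m :=
  Int.mul_ediv_cancel_left _ (by omega)

lemma BSTi_Tf (hp : 0 < p) (hq : 0 < q) (x : List (BSBlock p q) × ℤ)
    (h : x.1.IsChain BSOk) : BSTi hp (BSTf hq x) = x := by
  obtain ⟨l, k⟩ := x
  have hs := BSrem_spec q hq k
  rcases l with _ | ⟨i | j, l⟩
  · simp [BSTf, BSTi, BSrem_mul, BSdiv_mul _ hp, hs]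
  · simp [BSTf, BSTi, BSrem_mul, BSdiv_mul _ hp, hs]
  · by_cases h0 : (BSrem q hq k).val = 0
    · rw [h0] at hs
      simp only [Nat.cast_zero, zero_add] at hs
      rcases l with _ | ⟨i' | j', l⟩
      · simp [BSTf, BSTi, h0, BSrem_add, BSdiv_add _ hp, hs]
      · have h1 : j.val ≠ 0 := (List.isChain_cons_cons.1 h).1
        simp [BSTf, BSTi, h0, BSrem_add, BSdiv_add _ hp, hs, h1]
      · simp [BSTf, BSTi, h0, BSrem_add, BSdiv_add _ hp, hs]
    · simp [BSTf, BSTi, h0, BSrem_mul, BSdiv_mul _ hp, hs]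

lemma BSTf_Ti (hp : 0 < p) (hq : 0 < q) (x : List (BSBlock p q) × ℤ)
    (h : x.1.IsChain BSOk) : BSTf hq (BSTi hp x) = x := by
  obtain ⟨l, k⟩ := x
  have hs := BSrem_spec p hp k
  rcases l with _ | ⟨i | j, l⟩
  · simp [BSTf, BSTi, BSrem_mul, BSdiv_mul _ hq, hs]
  · by_cases h0 : (BSrem p hp k).val = 0
    · rw [h0] at hs
      simp only [Nat.cast_zero, zero_add] at hs
      rcases l with _ | ⟨i' | j', l⟩
      · simp [BSTf, BSTi, h0, BSrem_add, BSdiv_add _ hq, hs]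
      · simp [BSTf, BSTi, h0, BSrem_add, BSdiv_add _ hq, hs]
      · have h1 : i.val ≠ 0 := (List.isChain_cons_cons.1 h).1
        simp [BSTf, BSTi, h0, BSrem_add, BSdiv_add _ hq, hs, h1]
    · simp [BSTf, BSTi, h0, BSrem_mul, BSdiv_mul _ hq, hs]
  · simp [BSTf, BSTi, BSrem_mul, BSdiv_mul _ hq, hs]

lemma BSTf_add (hq : 0 < q) (l : List (BSBlock p q)) (k : ℤ) :
    BSTf hq (l, k + q) = ((BSTf hq (l, k)).1, (BSTf hq (l, k)).2 + p) := by
  have h1 : BSrem q hq (k + q) = BSrem q hq k := by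
    apply Fin.ext; zify; simp [BSrem_val]
  have h2 : (k + q) / (q : ℤ) = k / q + 1 := by
    rw [Int.add_ediv_of_dvd_right (dvd_refl _), Int.ediv_self (by omega)]
  rcases l with _ | ⟨i | j, l⟩
  · simp [BSTf, h1, h2]; ring
  · simp [BSTf, h1, h2]; ring
  · simp only [BSTf, h1, h2]
    split_ifs <;> simp <;> ring

/-- Reduced states. -/
abbrev BSState (p q : ℕ) := {x : List (BSBlock p q) × ℤ // x.1.IsChain BSOk}

/-- The permutation of states given by `t`. -/
def BSTperm (hp : 0 < p) (hq : 0 < q) : Equiv.Perm (BSState p q) where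
  toFun s := ⟨BSTf hq s.1, BSTf_chain hq _ s.2⟩
  invFun s := ⟨BSTi hp s.1, BSTi_chain hp _ s.2⟩
  left_inv s := Subtype.ext (BSTi_Tf hp hq _ s.2)
  right_inv s := Subtype.ext (BSTf_Ti hp hq _ s.2)

/-- The permutation of states given by `a`. -/
def BSAperm : Equiv.Perm (BSState p q) where
  toFun s := ⟨(s.1.1, s.1.2 + 1), s.2⟩
  invFun s := ⟨(s.1.1, s.1.2 - 1), s.2⟩
  left_inv s := by simp
  right_inv s := by simp

lemma BSAperm_pow (n : ℕ) (s : BSState p q) :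
    (BSAperm ^ n) s = ⟨(s.1.1, s.1.2 + n), s.2⟩ := by
  induction n generalizing s with
  | zero => simp
  | succ n ih =>
    rw [pow_succ, Equiv.Perm.mul_apply, ih]
    simp [BSAperm]; ring

lemma BSAperm_zpow (n : ℤ) (s : BSState p q) :
    (BSAperm ^ n) s = ⟨(s.1.1, s.1.2 + n), s.2⟩ := by
  obtain ⟨n, rfl | rfl⟩ := n.eq_nat_or_neg
  · simpa using BSAperm_pow n s
  · rw [zpow_neg, Equiv.Perm.inv_eq_iff_eq, zpow_natCast, BSAperm_pow]
    simp

/-- Generators to permutations. -/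
def BSgen (hp : 0 < p) (hq : 0 < q) (i : Fin 2) : Equiv.Perm (BSState p q) :=
  if i = 0 then BSAperm⁻¹ else (BSTperm hp hq)⁻¹

lemma BSgen_rel (hp : 0 < p) (hq : 0 < q) :
    ∀ r ∈ BSRels p q, FreeGroup.lift (BSgen hp hq) r = 1 := by
  intro r hr
  rw [BSRels, Set.mem_singleton_iff] at hr
  subst hr
  simp only [map_mul, map_inv, map_pow, FreeGroup.lift_apply_of, BSgen]
  simp only [if_true, one_ne_zero, if_false, inv_pow, inv_inv]
  have key : BSTperm hp hq * BSAperm ^ q = BSAperm ^ p * BSTperm hp hq := by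
    ext1 s
    obtain ⟨⟨l, k⟩, hs⟩ := s
    rw [Equiv.Perm.mul_apply, Equiv.Perm.mul_apply, BSAperm_pow, BSAperm_pow]
    apply Subtype.ext
    exact BSTf_add hq l k
  rw [mul_assoc, mul_assoc, key]
  group

/-- The homomorphism to permutations. -/
def BSphi (hp : 0 < p) (hq : 0 < q) : BS p q →* Equiv.Perm (BSState p q) :=
  PresentedGroup.toGroup (BSgen_rel hp hq)

/-- The right action on states. -/
def BSact (hp : 0 < p) (hq : 0 < q) (s : BSState p q) (g : BS p q) : BSState p q :=
  (BSphi hp hq g)⁻¹ s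

lemma BSact_mul (hp : 0 < p) (hq : 0 < q) (s : BSState p q) (g h : BS p q) :
    BSact hp hq s (g * h) = BSact hp hq (BSact hp hq s g) h := by
  simp [BSact]

lemma BSphi_a (hp : 0 < p) (hq : 0 < q) : BSphi hp hq (BS.a p q) = BSAperm⁻¹ := by
  simp [BSphi, BS.a, BSgen]

lemma BSphi_t (hp : 0 < p) (hq : 0 < q) : BSphi hp hq (BS.t p q) = (BSTperm hp hq)⁻¹ := by
  simp [BSphi, BS.t, BSgen]

lemma BSact_a (hp : 0 < p) (hq : 0 < q) (s : BSState p q) (k : ℤ) :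
    BSact hp hq s (BS.a p q ^ k) = ⟨(s.1.1, s.1.2 + k), s.2⟩ := by
  rw [BSact, map_zpow, BSphi_a, inv_zpow, inv_inv, BSAperm_zpow]

lemma BSact_t (hp : 0 < p) (hq : 0 < q) (s : BSState p q) :
    (BSact hp hq s (BS.t p q)).1 = BSTf hq s.1 := by
  rw [BSact, BSphi_t, inv_inv]; rfl

lemma BSact_tinv (hp : 0 < p) (hq : 0 < q) (s : BSState p q) :
    (BSact hp hq s (BS.t p q)⁻¹).1 = BSTi hp s.1 := by
  rw [BSact, map_inv, BSphi_t, inv_inv]; rfl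

lemma BSact_elem (hp : 0 < p) (hq : 0 < q) (l : List (BSBlock p q)) (b : BSBlock p q)
    (h : (b :: l).IsChain BSOk) :
    BSact hp hq ⟨(l, 0), h.tail⟩ b.elem = ⟨(b :: l, 0), h⟩ := by
  apply Subtype.ext
  rcases b with i | j
  · rw [BSBlock.elem, BSact_mul, BSact_t, ← zpow_natCast, BSact_a]
    have h1 := BSrem_add q hq i 0
    have h2 := BSdiv_add q hq i 0
    simp only [mul_zero, add_zero] at h1 h2
    rcases l with _ | ⟨i' | j', l⟩
    · simp only [BSTf, zero_add, h1, h2, mul_zero]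
    · simp only [BSTf, zero_add, h1, h2, mul_zero]
    · have h3 : i.val ≠ 0 := (List.isChain_cons_cons.1 h).1
      simp only [BSTf, zero_add, h1, h2, mul_zero, h3, if_false]
  · rw [BSBlock.elem, BSact_mul, BSact_tinv, ← zpow_natCast, BSact_a]
    have h1 := BSrem_add p hp j 0
    have h2 := BSdiv_add p hp j 0
    simp only [mul_zero, add_zero] at h1 h2
    rcases l with _ | ⟨i' | j', l⟩
    · simp only [BSTi, zero_add, h1, h2, mul_zero]
    · have h3 : j.val ≠ 0 := (List.isChain_cons_cons.1 h).1
      simp only [BSTi, zero_add, h1, h2, mul_zero, h3, if_false]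
    · simp only [BSTi, zero_add, h1, h2, mul_zero]

/-- base state -/
def BSbase (p q : ℕ) : BSState p q := ⟨([], 0), List.isChain_nil⟩

lemma BSact_prod (hp : 0 < p) (hq : 0 < q) (l : List (BSBlock p q)) (h : l.IsChain BSOk) :
    BSact hp hq (BSbase p q) (l.reverse.map BSBlock.elem).prod = ⟨(l, 0), h⟩ := by
  induction l with
  | nil => simp [BSact, BSbase]
  | cons b l ih =>
    rw [List.reverse_cons, List.map_append, List.prod_append, BSact_mul, ih h.tail]
    simpa using BSact_elem hp hq l b h

lemma BSchain_of_reduced (bs : List (BSBlock p q)) (h : BSFreelyReduced bs) :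
    bs.reverse.IsChain BSOk := by
  rw [List.isChain_reverse]
  rw [BSFreelyReduced, ← FreeGroup.isReduced_iff_reduce_eq, FreeGroup.IsReduced] at h
  induction bs with
  | nil => simp
  | cons b bs ih =>
    have hw : BSBlockWord (b :: bs) = b.letters ++ BSBlockWord bs := by simp [BSBlockWord]
    rw [hw] at h
    have ih' := ih h.right_of_append
    rcases bs with _ | ⟨c, bs⟩
    · simp
    · rw [List.isChain_cons_cons]
      refine ⟨?_, ih'⟩
      have hw2 : BSBlockWord (c :: bs) = c.letters ++ BSBlockWord bs := by simp [BSBlockWord]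
      rw [hw2, List.isChain_append] at h
      have h3 := h.2.2
      rcases b with i | j <;> rcases c with i' | j'
      · trivial
      · intro h0
        have := h3 (1, true) (by simp [BSBlock.letters]) (1, false)
          (by simp [BSBlock.letters, h0])
        simp at this
      · intro h0
        have := h3 (1, false) (by simp [BSBlock.letters]) (1, true)
          (by simp [BSBlock.letters, h0])
        simp at this
      · trivial

lemma BSabs_div (n : ℕ) (hn : 0 < n) (k : ℤ) : |k / n| ≤ |k| + 1 := by
  have h1 := Int.emod_nonneg k (b := (n : ℤ)) (by omega)
  have h2 := Int.emod_lt_of_pos k (b := (n : ℤ)) (by omega)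
  have h3 := Int.emod_add_mul_ediv k n
  have hn' : (1 : ℤ) ≤ n := by omega
  have := abs_nonneg k
  rw [abs_le]
  rcases abs_cases k with ⟨h, h'⟩ | ⟨h, h'⟩ <;> rw [h] <;> constructor <;> nlinarith

lemma BSTf_bound (hpq : p < q) (hq : 0 < q) (x : List (BSBlock p q) × ℤ) :
    (BSTf hq x).1.length ≤ x.1.length + 1 ∧ |(BSTf hq x).2| + 1 ≤ 3 * q * (|x.2| + 1) := by
  obtain ⟨l, k⟩ := x
  have h1 := BSabs_div q hq k
  have h2 : |(p : ℤ) * (k / q)| ≤ q * (|k| + 1) := by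
    rw [abs_mul, Nat.abs_cast]
    exact mul_le_mul (by omega) h1 (abs_nonneg _) (by omega)
  have h0 := abs_nonneg k
  have hq' : (1 : ℤ) ≤ q := by omega
  rcases l with _ | ⟨i | j, l⟩
  · refine ⟨by simp [BSTf], ?_⟩
    simp only [BSTf]; nlinarith
  · refine ⟨by simp [BSTf], ?_⟩
    simp only [BSTf]; nlinarith
  · simp only [BSTf]
    split_ifs
    · refine ⟨by simp; omega, ?_⟩
      have := abs_add_le (j.val : ℤ) (p * (k / q))
      rw [Nat.abs_cast] at this
      have := j.2
      have : (j.val : ℤ) ≤ q := by omega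
      simp only; nlinarith
    · refine ⟨by simp, ?_⟩
      simp only; nlinarith

lemma BSTi_bound (hp : 0 < p) (hq : 0 < q) (x : List (BSBlock p q) × ℤ) :
    (BSTi hp x).1.length ≤ x.1.length + 1 ∧ |(BSTi hp x).2| + 1 ≤ 3 * q * (|x.2| + 1) := by
  obtain ⟨l, k⟩ := x
  have h1 := BSabs_div p hp k
  have h2 : |(q : ℤ) * (k / p)| ≤ q * (|k| + 1) := by
    rw [abs_mul, Nat.abs_cast]
    exact mul_le_mul (by omega) h1 (abs_nonneg _) (by omega)
  have h0 := abs_nonneg k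
  have hq' : (1 : ℤ) ≤ q := by omega
  rcases l with _ | ⟨i | j, l⟩
  · refine ⟨by simp [BSTi], ?_⟩
    simp only [BSTi]; nlinarith
  · simp only [BSTi]
    split_ifs
    · refine ⟨by simp; omega, ?_⟩
      have := abs_add_le (i.val : ℤ) (q * (k / p))
      rw [Nat.abs_cast] at this
      have := i.2
      have : (i.val : ℤ) ≤ q := by omega
      simp only; nlinarith
    · refine ⟨by simp, ?_⟩
      simp only; nlinarith
  · refine ⟨by simp [BSTi], ?_⟩
    simp only [BSTi]; nlinarith

/-- generating set -/
abbrev BSset (p q : ℕ) : Set (BS p q) := {BS.a p q, BS.t p q}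

lemma BSact_letter (hp : 0 < p) (hpq : p < q) (hq : 0 < q) (s : BSState p q)
    (x : Alph (BSset p q)) :
    (BSact hp hq s x.1).1.1.length ≤ s.1.1.length + 1 ∧
      |(BSact hp hq s x.1).1.2| + 1 ≤ 3 * q * (|s.1.2| + 1) := by
  have h0 := abs_nonneg s.1.2
  have hq' : (1 : ℤ) ≤ q := by omega
  have ha : ∀ k : ℤ, |k| ≤ 1 → (BSact hp hq s (BS.a p q ^ k)).1.1.length ≤ s.1.1.length + 1 ∧
      |(BSact hp hq s (BS.a p q ^ k)).1.2| + 1 ≤ 3 * q * (|s.1.2| + 1) := by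
    intro k hk
    rw [BSact_a]
    refine ⟨by simp, ?_⟩
    have := abs_add_le s.1.2 k
    simp only
    nlinarith
  obtain ⟨x, hx⟩ := x
  simp only [Set.mem_union, Set.mem_insert_iff, Set.mem_singleton_iff, Set.mem_inv] at hx
  rcases hx with (rfl | rfl) | (hx | hx)
  · simpa using ha 1 (by simp)
  · simp only [BSact_t]; exact BSTf_bound hpq hq _
  · obtain rfl := inv_eq_iff_eq_inv.1 hx
    simpa using ha (-1) (by simp)
  · obtain rfl := inv_eq_iff_eq_inv.1 hx
    simp only [BSact_tinv]; exact BSTi_bound hp hq _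

lemma BSeval_nil : eval (BSset p q) [] = 1 := rfl

lemma BSeval_cons (x : Alph (BSset p q)) (w : List (Alph (BSset p q))) :
    eval _ (x :: w) = x.1 * eval _ w := by
  unfold eval
  exact List.prod_cons

lemma BSeval_append (v w : List (Alph (BSset p q))) :
    eval _ (v ++ w) = eval _ v * eval _ w := by
  induction v with
  | nil => rw [BSeval_nil, one_mul]; rfl
  | cons x v ih => rw [List.cons_append, BSeval_cons, BSeval_cons, ih, mul_assoc]

lemma BSact_word (hp : 0 < p) (hpq : p < q) (hq : 0 < q) (w : List (Alph (BSset p q)))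
    (s : BSState p q) :
    (BSact hp hq s (eval _ w)).1.1.length ≤ s.1.1.length + w.length ∧
      |(BSact hp hq s (eval _ w)).1.2| + 1 ≤ (3 * q) ^ w.length * (|s.1.2| + 1) := by
  induction w generalizing s with
  | nil => rw [BSeval_nil]; simp [BSact]
  | cons x w ih =>
    have he := BSeval_cons x w
    rw [he, BSact_mul]
    obtain ⟨h1, h2⟩ := ih (BSact hp hq s x.1)
    obtain ⟨h3, h4⟩ := BSact_letter hp hpq hq s x
    refine ⟨by simp only [List.length_cons]; omega, h2.trans ?_⟩
    rw [List.length_cons, pow_succ, mul_assoc]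
    exact mul_le_mul_of_nonneg_left h4 (by positivity)

/-- `g` has a word of length at most `n`. -/
def BSHas (p q : ℕ) (g : BS p q) (n : ℕ) : Prop :=
  ∃ w : List (Alph (BSset p q)), eval _ w = g ∧ w.length ≤ n

lemma BSHas.le {g : BS p q} {n : ℕ} (h : BSHas p q g n) : wordLength (BSset p q) g ≤ n := by
  obtain ⟨w, h1, h2⟩ := h
  have h3 : wordLength (BSset p q) g ≤ w.length := Nat.sInf_le ⟨w, h1, rfl⟩
  exact h3.trans h2

lemma BSHas.mono {g : BS p q} {n m : ℕ} (h : BSHas p q g n) (hm : n ≤ m) : BSHas p q g m := by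
  obtain ⟨w, h1, h2⟩ := h
  exact ⟨w, h1, h2.trans hm⟩

lemma BSHas.mul {g h : BS p q} {n m : ℕ} (hg : BSHas p q g n) (hh : BSHas p q h m) :
    BSHas p q (g * h) (n + m) := by
  obtain ⟨w, h1, h2⟩ := hg
  obtain ⟨v, h3, h4⟩ := hh
  refine ⟨w ++ v, ?_, by simp; omega⟩
  rw [← h1, ← h3, BSeval_append]

lemma BSHas.one : BSHas p q 1 0 := ⟨[], rfl, le_refl _⟩

lemma BSHas.of_mem {g : BS p q} (h : g ∈ BSset p q ∪ (BSset p q)⁻¹) : BSHas p q g 1 :=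
  ⟨[⟨g, h⟩], (BSeval_cons _ _).trans (mul_one g), le_refl _⟩

lemma BSHas.inv {g : BS p q} {n : ℕ} (hg : BSHas p q g n) : BSHas p q g⁻¹ n := by
  obtain ⟨w, h1, h2⟩ := hg
  subst h1
  refine BSHas.mono ?_ h2
  clear h2
  induction w with
  | nil => rw [BSeval_nil, inv_one]; exact BSHas.one
  | cons x w ih =>
    have he := BSeval_cons x w
    rw [he, mul_inv_rev]
    refine ih.mul (BSHas.of_mem ?_)
    have := x.2
    simp only [Set.mem_union, Set.mem_inv, inv_inv] at this ⊢
    exact this.symm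

lemma BSHas.pow {g : BS p q} {n : ℕ} (hg : BSHas p q g n) (i : ℕ) :
    BSHas p q (g ^ i) (n * i) := by
  induction i with
  | zero => simpa using BSHas.one
  | succ i ih => rw [pow_succ]; exact ih.mul hg

lemma BSHas.a : BSHas p q (BS.a p q) 1 := BSHas.of_mem (by simp)
lemma BSHas.t : BSHas p q (BS.t p q) 1 := BSHas.of_mem (by simp)

lemma BSHas.apow (i : ℕ) : BSHas p q (BS.a p q ^ i) i := by
  simpa using BSHas.a.pow i

lemma BSHas.elem (b : BSBlock p q) (hpq : p < q) : BSHas p q b.elem q := by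
  rcases b with i | j
  · exact ((BSHas.apow i.val).mul BSHas.t).mono (by have := i.2; omega)
  · exact ((BSHas.apow j.val).mul BSHas.t.inv).mono (by have := j.2; omega)

lemma BSHas.prod (hpq : p < q) (bs : List (BSBlock p q)) :
    BSHas p q (bs.map BSBlock.elem).prod (q * bs.length) := by
  induction bs with
  | nil => simpa using BSHas.one
  | cons b bs ih =>
    rw [List.map_cons, List.prod_cons]
    exact ((BSHas.elem b hpq).mul ih).mono (by simp only [List.length_cons]; nlinarith)

lemma BSrel (p q : ℕ) : BS.t p q * BS.a p q ^ p * (BS.t p q)⁻¹ = BS.a p q ^ q := by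
  have h := PresentedGroup.one_of_mem (rels := BSRels p q) (Set.mem_singleton _)
  simp only [map_mul, map_inv, map_pow] at h
  exact mul_inv_eq_one.1 h

lemma BSrel_pow (p q m : ℕ) :
    BS.t p q * BS.a p q ^ (p * m) * (BS.t p q)⁻¹ = BS.a p q ^ (q * m) := by
  rw [pow_mul, pow_mul, ← BSrel, conj_pow]

/-- logarithmic constant -/
noncomputable def BSB (p q : ℕ) : ℝ := (q + 1) / Real.log ((q + 1) / (p + 1))

lemma BSratio (hpq : p < q) : 0 < Real.log (((q : ℝ) + 1) / (p + 1)) := by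
  apply Real.log_pos
  rw [one_lt_div (by positivity)]
  have : (p : ℝ) < q := by exact_mod_cast hpq
  linarith

lemma BSHas_log (hpq : p < q) (k : ℕ) :
    ∃ n : ℕ, BSHas p q (BS.a p q ^ k) n ∧ (n : ℝ) ≤ BSB p q * Real.log (k + 1) + q := by
  induction k using Nat.strong_induction_on with
  | _ k ih =>
    have hL := BSratio hpq
    have hB : 0 < BSB p q := div_pos (by positivity) hL
    rcases lt_or_ge k q with hk | hk
    · refine ⟨k, BSHas.apow k, ?_⟩
      have : 0 ≤ Real.log ((k : ℝ) + 1) := Real.log_nonneg (by simp)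
      have h2 : (k : ℝ) ≤ q := by exact_mod_cast hk.le
      have := mul_nonneg hB.le this
      linarith
    · have hq : 0 < q := by omega
      have hm : 1 ≤ k / q := (Nat.one_le_div_iff hq).2 hk
      have hk2 := Nat.mod_add_div k q
      have hr := Nat.mod_lt k hq
      set m := k / q
      set i := k % q
      obtain ⟨n, hn, hn2⟩ := ih (p * m) (by nlinarith)
      refine ⟨i + (1 + n + 1), ?_, ?_⟩
      · have : BS.a p q ^ k = BS.a p q ^ i *
            (BS.t p q * BS.a p q ^ (p * m) * (BS.t p q)⁻¹) := by
          rw [BSrel_pow, ← pow_add, hk2]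
        rw [this]
        exact (BSHas.apow i).mul ((BSHas.t.mul hn).mul BSHas.t.inv)
      · have h1 : Real.log (((p * m : ℕ) : ℝ) + 1) ≤
            Real.log ((k : ℝ) + 1) - Real.log (((q : ℝ) + 1) / (p + 1)) := by
          rw [← Real.log_div (by positivity) (by positivity)]
          apply Real.log_le_log (by positivity)
          rw [div_div_eq_mul_div, le_div_iff₀ (by positivity)]
          have : (p * m + 1) * (q + 1) ≤ (k + 1) * (p + 1) := by
            obtain ⟨d, rfl⟩ := Nat.exists_eq_add_of_lt hpq
            obtain ⟨e, he⟩ := Nat.exists_eq_add_of_le hm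
            rw [← hk2, he]
            nlinarith [Nat.zero_le (d * e), Nat.zero_le (i * p), Nat.zero_le e, Nat.zero_le i]
          exact_mod_cast this
        have h2 := mul_le_mul_of_nonneg_left h1 hB.le
        have h3 : BSB p q * Real.log (((q : ℝ) + 1) / (p + 1)) = q + 1 := by
          rw [BSB]; field_simp
        rw [mul_sub, h3] at h2
        have h4 : (i : ℝ) + 1 ≤ q := by exact_mod_cast hr
        push_cast at *
        linarith

lemma BSHas_zlog (hpq : p < q) (k : ℤ) :
    ∃ n : ℕ, BSHas p q (BS.a p q ^ k) n ∧ (n : ℝ) ≤ BSB p q * Real.log (|k| + 1) + q := by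
  obtain ⟨m, rfl | rfl⟩ := k.eq_nat_or_neg
  · obtain ⟨n, h1, h2⟩ := BSHas_log hpq m
    exact ⟨n, by simpa using h1, by simpa using h2⟩
  · obtain ⟨n, h1, h2⟩ := BSHas_log hpq m
    exact ⟨n, by simpa using h1.inv, by simpa using h2⟩

end helpers

end CAG

open CAG in
/-- Metric estimates for `BS(p,q)`, `1 ≤ p < q` (Burillo–Elder): there are constants
`C₁, C₂, D₁, D₂ > 0` such that for every `g ∈ BS(p,q)` with normal form `g = w̃(a,t)·aᵏ`
(`w̃` a freely reduced word of blocks, `k ∈ ℤ`),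
`C₁·(|w̃| + log(|k|+1)) − D₁ ≤ d_{{a,t}}(g) ≤ C₂·(|w̃| + log(|k|+1)) + D₂`. -/
theorem BS_metric_estimates (p q : ℕ) (hp : 1 ≤ p) (hpq : p < q) :
    ∃ C₁ C₂ D₁ D₂ : ℝ, 0 < C₁ ∧ 0 < C₂ ∧ 0 < D₁ ∧ 0 < D₂ ∧
      ∀ (g : BS p q) (bs : List (BSBlock p q)) (k : ℤ),
        BSFreelyReduced bs → g = (bs.map BSBlock.elem).prod * BS.a p q ^ k →
          C₁ * (bs.length + Real.log (|k| + 1)) - D₁ ≤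
              (wordLength ({BS.a p q, BS.t p q} : Set (BS p q)) g : ℝ) ∧
            (wordLength ({BS.a p q, BS.t p q} : Set (BS p q)) g : ℝ) ≤
              C₂ * (bs.length + Real.log (|k| + 1)) + D₂ := by
  have hq : 0 < q := by omega
  have hL := BSratio hpq
  have hB : 0 < BSB p q := div_pos (by positivity) hL
  have hq1 : (1 : ℝ) ≤ q := by exact_mod_cast hq
  have hE : 0 < Real.log (3 * q) := Real.log_pos (by linarith)
  have hE1 : 0 < 1 + Real.log (3 * q) := by linarith
  refine ⟨1 / (1 + Real.log (3 * q)), q + BSB p q, 1, q, by positivity, by positivity,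
    one_pos, by positivity, ?_⟩
  intro g bs k hred hg
  obtain ⟨n, hn, hn2⟩ := BSHas_zlog hpq k
  have hhas := (BSHas.prod hpq bs).mul hn
  rw [← hg] at hhas
  have hk1 : (0 : ℝ) ≤ |(k : ℝ)| := abs_nonneg _
  have hk0 : 0 ≤ Real.log ((|k| : ℤ) + 1) := Real.log_nonneg (by push_cast; linarith)
  constructor
  · have hne : {n | ∃ w : List (Alph (BSset p q)), eval _ w = g ∧ w.length = n}.Nonempty := by
      obtain ⟨w, h1, _⟩ := hhas
      exact ⟨_, w, h1, rfl⟩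
    obtain ⟨w, hw, hlen⟩ := Nat.sInf_mem hne
    change w.length = wordLength (BSset p q) g at hlen
    rw [← hlen]
    have hch := BSchain_of_reduced bs hred
    have hact := BSact_prod hp hq bs.reverse hch
    rw [List.reverse_reverse] at hact
    obtain ⟨h1, h2⟩ := BSact_word hp hpq hq w (BSbase p q)
    rw [hw, hg, BSact_mul, hact, BSact_a] at h1 h2
    simp only [BSbase, List.length_reverse, List.length_nil, zero_add, abs_zero, mul_one]
      at h1 h2
    have h3 : Real.log ((|k| : ℤ) + 1) ≤ w.length * Real.log (3 * q) := by
      rw [← Real.log_pow]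
      apply Real.log_le_log (by push_cast; linarith)
      exact_mod_cast h2
    have h4 : (bs.length : ℝ) ≤ w.length := by exact_mod_cast h1
    have h5 : 1 / (1 + Real.log (3 * q)) * (bs.length + Real.log ((|k| : ℤ) + 1)) ≤
        w.length := by
      rw [div_mul_eq_mul_div, one_mul, div_le_iff₀ hE1]
      linarith
    linarith
  · have h1 : (wordLength (BSset p q) g : ℝ) ≤ ((q * bs.length + n : ℕ) : ℝ) := by
      exact_mod_cast hhas.le
    refine h1.trans ?_
    push_cast at *
    have h2 : 0 ≤ (bs.length : ℝ) := by positivity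
    have h3 := mul_nonneg hB.le h2
    have h4 := mul_nonneg (by linarith : (0 : ℝ) ≤ q) hk0
    linarith
end
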